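/- Assume hypothesis (H3) and let 1 < μ < 2. The Fredholm integral equation u(x) = −(κ(ψ(x)−ψ_a)^{μ−1}/(2Γ(μ))) ∫_a^b ψ'(τ)(ψ_b−ψ(τ)) f(τ, u(τ)) dτ + (1/Γ(μ)) ∫_a^x ψ'(τ)(ψ(x)−ψ(τ))^{μ−1} f(τ, u(τ)) dτ possesses a unique solution u ∈ C[a,b]. -/

import Mathlib

open MeasureTheory Set

/-!
Write `I^α` for the Riemann–Liouville integral of order `α` with respect to `ψ`, based at `a`.
The equation reads `u = A (f (·, u))` with the linear operator
`A g x = I^μ g x - κ (ψ x - ψ a)^(μ-1) / (2 Γ(μ)) • I^2 g b`.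
Substituting `s = ψ τ` evaluates the mass of the kernel of `I^α`, so
`‖I^α g x‖ ≤ (ψ x - ψ a)^α / Γ(α+1) * sup ‖g‖`. Hence `A` has norm at most
`(ψ b - ψ a)^μ (2+μ) / (2 Γ(μ+1))` on `C[a,b]`, and the bound imposed on the Lipschitz constant
makes `u ↦ A (f (·, u))` a contraction there.
-/

open scoped NNReal

section Superposition

/-- The superposition (Nemytskii) operator `u ↦ f (·, u ·)` between spaces of continuous maps. -/
def superposition {X E F : Type*} [TopologicalSpace X] [TopologicalSpace E] [TopologicalSpace F]
    (f : C(X × E, F)) (u : C(X, E)) : C(X, F) :=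
  f.comp ((ContinuousMap.id X).prodMk u)

variable {X E F : Type*} [TopologicalSpace X] [CompactSpace X] [PseudoMetricSpace F]

lemma lipschitzWith_superposition [PseudoMetricSpace E] {f : C(X × E, F)} {K : ℝ≥0}
    (hf : ∀ x, LipschitzWith K fun y => f (x, y)) : LipschitzWith K (superposition f) := by
  refine LipschitzWith.of_dist_le_mul fun u v => ?_
  refine (ContinuousMap.dist_le (by positivity)).2 fun x => ?_
  calc dist (f (x, u x)) (f (x, v x)) ≤ K * dist (u x) (v x) := (hf x).dist_le_mul _ _
    _ ≤ K * dist u v := by gcongr; exact ContinuousMap.dist_apply_le_dist x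

theorem existsUnique_comp_superposition_eq [MetricSpace E] [CompleteSpace E] [Nonempty E]
    {A : C(X, F) → C(X, E)} {f : C(X × E, F)} {Q K : ℝ≥0} (hA : LipschitzWith Q A)
    (hf : ∀ x, LipschitzWith K fun y => f (x, y)) (hQK : Q * K < 1) :
    ∃! u, A (superposition f u) = u := by
  have hT : ContractingWith (Q * K) (A ∘ superposition f) :=
    ⟨mod_cast hQK, hA.comp (lipschitzWith_superposition hf)⟩
  have : Nonempty C(X, E) := ‹Nonempty E›.map (ContinuousMap.const X)
  exact ⟨hT.fixedPoint, hT.fixedPoint_isFixedPt, fun _ hu => hT.fixedPoint_unique hu⟩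

end Superposition

lemma deriv_nonneg_of_monotoneOn_Icc {ψ : ℝ → ℝ} {a b x : ℝ} (hmono : MonotoneOn ψ (Icc a b))
    (hab : a < b) (hψ : DifferentiableAt ℝ ψ x) (hx : x ∈ Icc a b) : 0 ≤ deriv ψ x := by
  rw [← hψ.derivWithin (uniqueDiffOn_Icc hab x hx)]
  exact hmono.derivWithin_nonneg

section FractionalIntegral

variable {E : Type*} [NormedAddCommGroup E] [NormedSpace ℝ E]
  {ψ : ℝ → ℝ} {α a x : ℝ} {g h : ℝ → E}

/-- The kernel `ψ'(τ) (ψ(x) - ψ(τ))^(α-1)` of the Riemann–Liouville integral of order `α` with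
respect to `ψ`, without the normalization `1 / Γ(α)`. -/
noncomputable def fracKernel (ψ : ℝ → ℝ) (α x τ : ℝ) : ℝ :=
  deriv ψ τ * (ψ x - ψ τ) ^ (α - 1)

/-- The Riemann–Liouville fractional integral of order `α` with respect to `ψ`, based at `a`. -/
noncomputable def fracIntegral (ψ : ℝ → ℝ) (α a : ℝ) (g : ℝ → E) (x : ℝ) : E :=
  (1 / Real.Gamma α) • ∫ τ in a..x, fracKernel ψ α x τ • g τ

lemma continuous_uncurry_fracKernel (hψ : ContDiff ℝ 1 ψ) (hα : 1 ≤ α) :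
    Continuous (Function.uncurry (fracKernel ψ α)) := by
  have hψc := hψ.continuous
  have hψ' := hψ.continuous_deriv_one
  have hpow := Real.continuous_rpow_const (sub_nonneg.2 hα)
  exact (hψ'.comp continuous_snd).mul (hpow.comp (by fun_prop : Continuous fun p : ℝ × ℝ =>
    ψ p.1 - ψ p.2))

lemma continuous_fracKernel (hψ : ContDiff ℝ 1 ψ) (hα : 1 ≤ α) :
    Continuous (fracKernel ψ α x) :=
  (continuous_uncurry_fracKernel hψ hα).comp (Continuous.prodMk_right x)

lemma fracKernel_nonneg {τ : ℝ} (hmono : MonotoneOn ψ (Icc a x)) (hψ : DifferentiableAt ℝ ψ τ)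
    (hτ : τ ∈ Ioc a x) : 0 ≤ fracKernel ψ α x τ := by
  have hax : a < x := hτ.1.trans_le hτ.2
  have hψτ : ψ τ ≤ ψ x := hmono (Ioc_subset_Icc_self hτ) (right_mem_Icc.2 hax.le) hτ.2
  exact mul_nonneg (deriv_nonneg_of_monotoneOn_Icc hmono hax hψ (Ioc_subset_Icc_self hτ))
    (Real.rpow_nonneg (sub_nonneg.2 hψτ) _)

lemma integral_fracKernel (hψ : ContDiff ℝ 1 ψ) (hα : 1 ≤ α) :
    ∫ τ in a..x, fracKernel ψ α x τ = (ψ x - ψ a) ^ α / α := by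
  have hpow : Continuous fun s => (ψ x - s) ^ (α - 1) :=
    (Real.continuous_rpow_const (sub_nonneg.2 hα)).comp (by fun_prop)
  calc ∫ τ in a..x, fracKernel ψ α x τ
      = ∫ τ in a..x, ((fun s => (ψ x - s) ^ (α - 1)) ∘ ψ) τ * deriv ψ τ := by
        simp only [fracKernel, Function.comp_apply, mul_comm]
    _ = ∫ s in ψ a..ψ x, (ψ x - s) ^ (α - 1) :=
        intervalIntegral.integral_comp_mul_deriv
          (fun τ _ => (hψ.differentiable one_ne_zero τ).hasDerivAt)
          hψ.continuous_deriv_one.continuousOn hpow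
    _ = ∫ s in 0..ψ x - ψ a, s ^ (α - 1) := by
        rw [intervalIntegral.integral_comp_sub_left (fun s => s ^ (α - 1)), sub_self]
    _ = (ψ x - ψ a) ^ α / α := by
        rw [integral_rpow (Or.inl (by linarith)), sub_add_cancel,
          Real.zero_rpow (by linarith), sub_zero]

lemma continuous_fracIntegral (hψ : ContDiff ℝ 1 ψ) (hα : 1 ≤ α) (hg : Continuous g) :
    Continuous (fracIntegral ψ α a g) := by
  have hker := continuous_uncurry_fracKernel hψ hα
  have hint : Continuous fun x => ∫ τ in a..x, fracKernel ψ α x τ • g τ :=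
    intervalIntegral.continuous_parametric_intervalIntegral_of_continuous
      (hker.smul (hg.comp continuous_snd)) continuous_id
  exact hint.const_smul _

lemma fracIntegral_sub (hψ : ContDiff ℝ 1 ψ) (hα : 1 ≤ α) (hg : Continuous g)
    (hh : Continuous h) :
    fracIntegral ψ α a (g - h) x = fracIntegral ψ α a g x - fracIntegral ψ α a h x := by
  have hker : Continuous (fracKernel ψ α x) := continuous_fracKernel hψ hα
  simp only [fracIntegral, Pi.sub_apply, smul_sub]
  rw [← smul_sub]
  congr 1
  exact intervalIntegral.integral_sub ((hker.smul hg).intervalIntegrable _ _)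
    ((hker.smul hh).intervalIntegrable _ _)

lemma fracIntegral_congr (hax : a ≤ x) (hgh : EqOn g h (Icc a x)) :
    fracIntegral ψ α a g x = fracIntegral ψ α a h x := by
  unfold fracIntegral
  congr 1
  refine intervalIntegral.integral_congr fun τ hτ => ?_
  rw [uIcc_of_le hax] at hτ
  simp only [hgh hτ]

lemma norm_fracIntegral_le {M : ℝ} (hψ : ContDiff ℝ 1 ψ) (hmono : MonotoneOn ψ (Icc a x))
    (hα : 1 ≤ α) (hax : a ≤ x) (hM : ∀ τ ∈ Icc a x, ‖g τ‖ ≤ M) :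
    ‖fracIntegral ψ α a g x‖ ≤ (ψ x - ψ a) ^ α / Real.Gamma (α + 1) * M := by
  have hα0 : 0 < α := by linarith
  have : 0 < Real.Gamma α := Real.Gamma_pos_of_pos hα0
  have hint : ‖∫ τ in a..x, fracKernel ψ α x τ • g τ‖ ≤ ∫ τ in a..x, fracKernel ψ α x τ * M := by
    refine intervalIntegral.norm_integral_le_of_norm_le hax (ae_of_all _ fun τ hτ => ?_)
      (((continuous_fracKernel hψ hα).mul continuous_const).intervalIntegrable _ _)
    have hker := fracKernel_nonneg (α := α) hmono (hψ.differentiable one_ne_zero τ) hτ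
    rw [norm_smul, Real.norm_of_nonneg hker]
    gcongr
    exact hM τ (Ioc_subset_Icc_self hτ)
  rw [intervalIntegral.integral_mul_const, integral_fracKernel hψ hα] at hint
  calc ‖fracIntegral ψ α a g x‖
      = 1 / Real.Gamma α * ‖∫ τ in a..x, fracKernel ψ α x τ • g τ‖ := by
        rw [fracIntegral, norm_smul, Real.norm_of_nonneg (by positivity)]
    _ ≤ 1 / Real.Gamma α * ((ψ x - ψ a) ^ α / α * M) := by gcongr
    _ = (ψ x - ψ a) ^ α / Real.Gamma (α + 1) * M := by
        rw [Real.Gamma_add_one hα0.ne']; field_simp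

end FractionalIntegral

section FredholmOperator

variable {E : Type*} [NormedAddCommGroup E] [NormedSpace ℝ E]
  {ψ : ℝ → ℝ} {μ a b x : ℝ} {g h : ℝ → E}

/-- The linear integral operator of the Fredholm equation. Its integral over `[a, b]`, with kernel
`ψ'(τ) (ψ(b) - ψ(τ))`, is the fractional integral of order `2` at `b`, as `Γ(2) = 1`. -/
noncomputable def fredholmIntegral (ψ : ℝ → ℝ) (μ a b : ℝ) (g : ℝ → E) (x : ℝ) : E :=
  -(2 / (ψ b - ψ a) * (ψ x - ψ a) ^ (μ - 1) / (2 * Real.Gamma μ)) • fracIntegral ψ 2 a g b +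
    fracIntegral ψ μ a g x

lemma fredholmIntegral_eq :
    fredholmIntegral ψ μ a b g x =
      -(2 / (ψ b - ψ a) * (ψ x - ψ a) ^ (μ - 1) / (2 * Real.Gamma μ)) •
          (∫ τ in a..b, (deriv ψ τ * (ψ b - ψ τ)) • g τ) +
        (1 / Real.Gamma μ) • ∫ τ in a..x, (deriv ψ τ * (ψ x - ψ τ) ^ (μ - 1)) • g τ := by
  have horder : (2 : ℝ) - 1 = 1 := by norm_num
  simp only [fredholmIntegral, fracIntegral, fracKernel, horder, Real.rpow_one, Real.Gamma_two,
    div_one, one_smul]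

lemma continuous_fredholmIntegral (hψ : ContDiff ℝ 1 ψ) (hμ : 1 ≤ μ) (hg : Continuous g) :
    Continuous (fredholmIntegral ψ μ a b g) := by
  have hψc := hψ.continuous
  have hpow : Continuous fun x => (ψ x - ψ a) ^ (μ - 1) :=
    (Real.continuous_rpow_const (sub_nonneg.2 hμ)).comp (by fun_prop)
  have hfrac := continuous_fracIntegral (a := a) hψ hμ hg
  unfold fredholmIntegral
  fun_prop

lemma fredholmIntegral_sub (hψ : ContDiff ℝ 1 ψ) (hμ : 1 ≤ μ) (hg : Continuous g)
    (hh : Continuous h) :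
    fredholmIntegral ψ μ a b (g - h) x =
      fredholmIntegral ψ μ a b g x - fredholmIntegral ψ μ a b h x := by
  simp only [fredholmIntegral, fracIntegral_sub hψ one_le_two hg hh, fracIntegral_sub hψ hμ hg hh,
    smul_sub]
  abel

lemma fredholmIntegral_congr (hgh : EqOn g h (Icc a b)) (hx : x ∈ Icc a b) :
    fredholmIntegral ψ μ a b g x = fredholmIntegral ψ μ a b h x := by
  rw [fredholmIntegral, fredholmIntegral, fracIntegral_congr (hx.1.trans hx.2) hgh,
    fracIntegral_congr hx.1 (hgh.mono (Icc_subset_Icc_right hx.2))]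

/-- The bound on the norm of the Fredholm operator on `C[a,b]`, as a function of the order `μ` and
of `L = ψ b - ψ a`. -/
noncomputable def fredholmBound (μ L : ℝ) : ℝ :=
  L ^ μ * (2 + μ) / (2 * Real.Gamma (μ + 1))

lemma fredholmBound_pos {L : ℝ} (hμ : 0 < μ) (hL : 0 < L) : 0 < fredholmBound μ L := by
  have : 0 < Real.Gamma (μ + 1) := Real.Gamma_pos_of_pos (by linarith)
  unfold fredholmBound
  positivity

lemma inv_fredholmBound {L : ℝ} (hL : 0 ≤ L) :
    (fredholmBound μ L)⁻¹ = (2 / L) ^ μ * Real.Gamma (μ + 1) / (2 ^ (μ - 1) * (2 + μ)) := by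
  have hpow : (2 : ℝ) ^ μ = 2 ^ (μ - 1) * 2 := by
    rw [← Real.rpow_add_one two_ne_zero, sub_add_cancel]
  rw [fredholmBound, inv_div, Real.div_rpow zero_le_two hL, hpow]
  field_simp

lemma norm_fredholmIntegral_le {M : ℝ} (hψ : ContDiff ℝ 1 ψ) (hmono : MonotoneOn ψ (Icc a b))
    (hψab : ψ a < ψ b) (hμ : 1 ≤ μ) (hM : ∀ τ ∈ Icc a b, ‖g τ‖ ≤ M) (hx : x ∈ Icc a b) :
    ‖fredholmIntegral ψ μ a b g x‖ ≤ fredholmBound μ (ψ b - ψ a) * M := by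
  have hab : a ≤ b := hx.1.trans hx.2
  have hμ0 : 0 < μ := by linarith
  have hM0 : 0 ≤ M := (norm_nonneg _).trans (hM x hx)
  have : 0 < Real.Gamma μ := Real.Gamma_pos_of_pos hμ0
  have hax : 0 ≤ ψ x - ψ a := sub_nonneg.2 (hmono (left_mem_Icc.2 hab) hx hx.1)
  have hxb : ψ x - ψ a ≤ ψ b - ψ a := sub_le_sub_right (hmono hx (right_mem_Icc.2 hab) hx.2) _
  have hfull := norm_fracIntegral_le hψ hmono one_le_two hab hM
  have hpart := norm_fracIntegral_le hψ (hmono.mono (Icc_subset_Icc_right hx.2)) hμ hx.1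
    fun τ hτ => hM τ ⟨hτ.1, hτ.2.trans hx.2⟩
  have hΓ3 : Real.Gamma (2 + 1) = 2 := by
    rw [Real.Gamma_add_one two_ne_zero, Real.Gamma_two, mul_one]
  rw [hΓ3, Real.rpow_two] at hfull
  set L := ψ b - ψ a
  have hL : 0 < L := sub_pos.2 hψab
  calc ‖fredholmIntegral ψ μ a b g x‖
      ≤ 2 / L * (ψ x - ψ a) ^ (μ - 1) / (2 * Real.Gamma μ) * ‖fracIntegral ψ 2 a g b‖
          + ‖fracIntegral ψ μ a g x‖ := by
        refine (norm_add_le _ _).trans_eq ?_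
        rw [norm_smul, norm_neg, Real.norm_of_nonneg (by positivity)]
    _ ≤ 2 / L * L ^ (μ - 1) / (2 * Real.Gamma μ) * (L ^ 2 / 2 * M)
          + L ^ μ / Real.Gamma (μ + 1) * M := by
        have : 0 ≤ μ - 1 := sub_nonneg.2 hμ
        have hpart' := hpart.trans (show _ ≤ L ^ μ / Real.Gamma (μ + 1) * M by gcongr)
        gcongr
    _ = fredholmBound μ L * M := by
        rw [fredholmBound, Real.Gamma_add_one hμ0.ne', Real.rpow_sub_one hL.ne']
        field_simp
        ring

/-- `fredholmIntegral` as an operator on `C[a,b]`; a function on `[a,b]` is extended by its boundary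
values. -/
noncomputable def fredholmOperator (hψ : ContDiff ℝ 1 ψ) (hμ : 1 ≤ μ) (hab : a ≤ b)
    (g : C(Icc a b, E)) : C(Icc a b, E) where
  toFun x := fredholmIntegral ψ μ a b (g.IccExtend hab) x
  continuous_toFun :=
    (continuous_fredholmIntegral hψ hμ (g.IccExtend hab).continuous).comp continuous_subtype_val

lemma lipschitzWith_fredholmOperator (hψ : ContDiff ℝ 1 ψ) (hμ : 1 ≤ μ) (hab : a ≤ b)
    (hmono : MonotoneOn ψ (Icc a b)) (hψab : ψ a < ψ b) :
    LipschitzWith (fredholmBound μ (ψ b - ψ a)).toNNReal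
      (fredholmOperator (E := E) hψ hμ hab) := by
  have hQ : 0 < fredholmBound μ (ψ b - ψ a) :=
    fredholmBound_pos (by linarith) (sub_pos.2 hψab)
  refine LipschitzWith.of_dist_le' fun g h => (ContinuousMap.dist_le (by positivity)).2 fun x => ?_
  rw [dist_eq_norm]
  change ‖fredholmIntegral ψ μ a b (g.IccExtend hab) x
    - fredholmIntegral ψ μ a b (h.IccExtend hab) x‖ ≤ _
  rw [← fredholmIntegral_sub hψ hμ (map_continuous _) (map_continuous _)]
  refine norm_fredholmIntegral_le hψ hmono hψab hμ (fun τ _ => ?_) x.2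
  rw [Pi.sub_apply, ← dist_eq_norm]
  exact ContinuousMap.dist_apply_le_dist (projIcc a b hab τ)

end FredholmOperator

section FredholmEquation

variable {E : Type*} [NormedAddCommGroup E] [NormedSpace ℝ E] {ψ : ℝ → ℝ} {μ a b : ℝ}
  {f : ℝ → E → E}

/-- `u` is a continuous solution on `[a,b]` of the Fredholm equation with nonlinearity `f`. -/
def IsFredholmSolution (ψ : ℝ → ℝ) (μ a b : ℝ) (f : ℝ → E → E) (u : ℝ → E) : Prop :=
  ContinuousOn u (Icc a b) ∧
    ∀ x ∈ Icc a b, u x = fredholmIntegral ψ μ a b (fun τ => f τ (u τ)) x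

lemma isFredholmSolution_iff_fredholmOperator_superposition_eq (hψ : ContDiff ℝ 1 ψ) (hμ : 1 ≤ μ)
    (hab : a ≤ b) {F : C(Icc a b × E, E)} (hF : ∀ x y, F (x, y) = f x y)
    {u : ℝ → E} {U : C(Icc a b, E)} (hu : ∀ x : Icc a b, u x = U x) :
    IsFredholmSolution ψ μ a b f u ↔ fredholmOperator hψ hμ hab (superposition F U) = U := by
  have hcont : ContinuousOn u (Icc a b) :=
    continuousOn_iff_continuous_domRestrict.2 (U.continuous.congr fun x => (hu x).symm)
  have hop (x : Icc a b) : fredholmOperator hψ hμ hab (superposition F U) x =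
      fredholmIntegral ψ μ a b (fun τ => f τ (u τ)) x := by
    refine fredholmIntegral_congr (fun τ hτ => ?_) x.2
    rw [ContinuousMap.coe_IccExtend, IccExtend_of_mem hab _ hτ]
    exact (hF ⟨τ, hτ⟩ _).trans (congrArg (f τ) (hu ⟨τ, hτ⟩).symm)
  simp only [IsFredholmSolution, hcont, true_and, ContinuousMap.ext_iff, hop, ← hu,
    Subtype.forall, eq_comm]

theorem stmt_6_general [CompleteSpace E] {C : ℝ} (hab : a ≤ b) (hψ : ContDiff ℝ 1 ψ)
    (hmono : MonotoneOn ψ (Icc a b)) (hψab : ψ a < ψ b) (hμ : 1 ≤ μ)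
    (hfc : ContinuousOn (fun p : ℝ × E => f p.1 p.2) (Icc a b ×ˢ univ))
    (hLip : ∀ x ∈ Icc a b, ∀ y₁ y₂, ‖f x y₁ - f x y₂‖ ≤ C * ‖y₁ - y₂‖)
    (hC : C < (2 / (ψ b - ψ a)) ^ μ * Real.Gamma (μ + 1) / (2 ^ (μ - 1) * (2 + μ))) :
    ∃ u, IsFredholmSolution ψ μ a b f u ∧
      ∀ v, IsFredholmSolution ψ μ a b f v → ∀ x ∈ Icc a b, v x = u x := by
  have hL : 0 < ψ b - ψ a := sub_pos.2 hψab
  have hQ : 0 < fredholmBound μ (ψ b - ψ a) := fredholmBound_pos (by linarith) hL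
  have hcontr : (fredholmBound μ (ψ b - ψ a)).toNNReal * C.toNNReal < 1 := by
    rw [← Real.toNNReal_mul hQ.le, Real.toNNReal_lt_one]
    rwa [← inv_fredholmBound hL.le, ← one_div, lt_div_iff₀' hQ] at hC
  let F : C(Icc a b × E, E) :=
    ⟨fun p => f p.1 p.2, hfc.comp_continuous (f := fun p : Icc a b × E => ((p.1 : ℝ), p.2))
      (by fun_prop) fun p => ⟨p.1.2, mem_univ _⟩⟩
  have hF (x : Icc a b) : LipschitzWith C.toNNReal fun y => F (x, y) :=
    LipschitzWith.of_dist_le' fun y₁ y₂ => by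
      rw [dist_eq_norm, dist_eq_norm]
      exact hLip x x.2 y₁ y₂
  have hsol {u : ℝ → E} {U : C(Icc a b, E)} (hu : ∀ x : Icc a b, u x = U x) :=
    isFredholmSolution_iff_fredholmOperator_superposition_eq hψ hμ hab
      (F := F) (f := f) (fun _ _ => rfl) hu
  obtain ⟨U, hU, hUunique⟩ := existsUnique_comp_superposition_eq
    (lipschitzWith_fredholmOperator hψ hμ hab hmono hψab) hF hcontr
  have hext (x : Icc a b) : U.IccExtend hab x = U x := IccExtend_val hab U x
  refine ⟨U.IccExtend hab, (hsol hext).2 hU, fun v hv x hx => ?_⟩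
  let V : C(Icc a b, E) := ⟨fun x => v x, continuousOn_iff_continuous_domRestrict.1 hv.1⟩
  have hVU : V = U := hUunique V ((hsol fun _ => rfl).1 hv)
  exact (congrArg (· ⟨x, hx⟩) hVU).trans (hext ⟨x, hx⟩).symm

end FredholmEquation

theorem stmt_6
    (a b CL μ : ℝ) (ψ : ℝ → ℝ) (f : ℝ → ℝ → ℝ)
    (hab : a < b)
    (hψ : ContDiff ℝ 1 ψ)
    (hmono : StrictMonoOn ψ (Icc a b))
    (hψpos : ∀ x ∈ Icc a b, 0 < deriv ψ x)
    (hμ1 : 1 < μ) (hμ2 : μ < 2)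
    (hfc : ContinuousOn (fun p : ℝ × ℝ => f p.1 p.2) (Icc a b ×ˢ (univ : Set ℝ)))
    (hLip : ∀ x ∈ Icc a b, ∀ y₁ y₂ : ℝ, |f x y₁ - f x y₂| ≤ CL * |y₁ - y₂|)
    (hCL : CL < (2 / (ψ b - ψ a)) ^ μ * Real.Gamma (μ + 1) / (2 ^ (μ - 1) * (2 + μ))) :
    ∃ u : ℝ → ℝ,
      (ContinuousOn u (Icc a b) ∧
        ∀ x ∈ Icc a b,
          u x = -(2 / (ψ b - ψ a) * (ψ x - ψ a) ^ (μ - 1) / (2 * Real.Gamma μ)) *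
              (∫ τ in a..b, deriv ψ τ * (ψ b - ψ τ) * f τ (u τ)) +
            (1 / Real.Gamma μ) *
              ∫ τ in a..x, deriv ψ τ * (ψ x - ψ τ) ^ (μ - 1) * f τ (u τ)) ∧
      ∀ v : ℝ → ℝ,
        (ContinuousOn v (Icc a b) ∧
          ∀ x ∈ Icc a b,
            v x = -(2 / (ψ b - ψ a) * (ψ x - ψ a) ^ (μ - 1) / (2 * Real.Gamma μ)) *
                (∫ τ in a..b, deriv ψ τ * (ψ b - ψ τ) * f τ (v τ)) +
              (1 / Real.Gamma μ) *
                ∫ τ in a..x, deriv ψ τ * (ψ x - ψ τ) ^ (μ - 1) * f τ (v τ)) →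
        ∀ x ∈ Icc a b, v x = u x := by
  simpa only [IsFredholmSolution, fredholmIntegral_eq, smul_eq_mul] using
    stmt_6_general hab.le hψ hmono.monotoneOn
      (hmono (left_mem_Icc.2 hab.le) (right_mem_Icc.2 hab.le) hab) hμ1.le hfc hLip hCL
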